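/- Let Z, X be finite sets and W a channel from X to Z. Let C = {x_1,…,x_N} ⊆ X^? be a multiset of codewords partitioned into D and C∖D with |D| = k, and let P̂, P̂₁, P̂₂ be the uniform-mixture output distributions induced by C, D, C∖D respectively, so that P̂ = (k/N) P̂₁ + (1−k/N) P̂₂. Suppose Q is a distribution on Z, T ⊆ Z with Q(Z∖T) ≤ α, P̂₂(T) ≤ 1 − α − δ − γ, and β_α(Q, P̂) ≥ 1 − α − δ. Then k/N ≥ γ. -/

import Mathlib

open Finset

/-- Optimal probability of missed detection at false-alarm level `α`:
`β_α(Q,P) = inf { P(T) : T ⊆ Z, Q(Z \ T) ≤ α }`. -/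
noncomputable def betaAlpha {Z : Type*} [Fintype Z] [DecidableEq Z]
    (α : ℝ) (Q P : Z → ℝ) : ℝ :=
  sInf {b : ℝ | ∃ T : Finset Z, (∑ z ∈ Tᶜ, Q z) ≤ α ∧ b = ∑ z ∈ T, P z}

theorem subcodebook_size_lower_bound {Z : Type*} [Fintype Z] [DecidableEq Z]
    (Q Phat P1 P2 : Z → ℝ)
    (hQ0 : ∀ z, 0 ≤ Q z) (hQ1 : ∑ z, Q z = 1)
    (hPhat0 : ∀ z, 0 ≤ Phat z) (hPhat1 : ∑ z, Phat z = 1)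
    (hP10 : ∀ z, 0 ≤ P1 z) (hP11 : ∑ z, P1 z = 1)
    (hP20 : ∀ z, 0 ≤ P2 z) (hP21 : ∑ z, P2 z = 1)
    (N k : ℕ) (hN : 0 < N) (hk : k ≤ N)
    (hmix : ∀ z, Phat z =
      ((k : ℝ) / (N : ℝ)) * P1 z + (1 - (k : ℝ) / (N : ℝ)) * P2 z)
    (α δ γ : ℝ) (T : Finset Z) (hT : ∑ z ∈ Tᶜ, Q z ≤ α)
    (hP2T : ∑ z ∈ T, P2 z ≤ 1 - α - δ - γ)
    (hbeta : 1 - α - δ ≤ betaAlpha α Q Phat) :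
    γ ≤ (k : ℝ) / (N : ℝ) := by
  have hb : betaAlpha α Q Phat ≤ ∑ z ∈ T, Phat z := by
    apply csInf_le
    · refine ⟨0, ?_⟩
      rintro b ⟨S, -, rfl⟩
      exact Finset.sum_nonneg fun z _ => hPhat0 z
    · exact ⟨T, hT, rfl⟩
  have hsum : ∑ z ∈ T, Phat z = ((k : ℝ) / (N : ℝ)) * ∑ z ∈ T, P1 z
      + (1 - (k : ℝ) / (N : ℝ)) * ∑ z ∈ T, P2 z := by
    rw [Finset.mul_sum, Finset.mul_sum, ← Finset.sum_add_distrib]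
    exact Finset.sum_congr rfl fun z _ => hmix z
  have h1 : ∑ z ∈ T, P1 z ≤ 1 := by
    rw [← hP11]
    exact Finset.sum_le_sum_of_subset_of_nonneg (Finset.subset_univ T) fun z _ _ => hP10 z
  have h2 : 0 ≤ ∑ z ∈ T, P2 z := Finset.sum_nonneg fun z _ => hP20 z
  have hc : 0 ≤ (k : ℝ) / (N : ℝ) := by positivity
  have h3 := mul_le_mul_of_nonneg_left h1 hc
  have h4 := mul_nonneg hc h2
  linarith
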